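/- Let K be any field, and let G_13 ⊆ S_8 be the subgroup of order 24 generated by σ_1 = (1,2)(3,4)(5,6)(7,8), σ_2 = (1,3)(2,4)(5,7)(6,8), κ = (1,5)(2,6)(3,7)(4,8), and φ_1 = (2,3,4)(7,6,5). Then the fixed field K(x_1,…,x_8)^{G_13} is K-rational. -/

import Mathlib

noncomputable section

/-- The rational function field `K(x_i : i ∈ I)` over `K`, realized as the fraction field
of the multivariate polynomial ring. -/
abbrev RFF (K : Type) [Field K] (I : Type) := FractionRing (MvPolynomial I K)

/-- The image of the variable `x_i` in the rational function field `K(x_i : i ∈ I)`. -/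
noncomputable def Xvar (K : Type) [Field K] (I : Type) (i : I) : RFF K I :=
  algebraMap (MvPolynomial I K) (RFF K I) (MvPolynomial.X i)

/-- Permutations of the variables as `K`-algebra automorphisms of the polynomial ring. -/
def renameHom (K : Type) [Field K] (I : Type) :
    Equiv.Perm I →* (MvPolynomial I K ≃ₐ[K] MvPolynomial I K) where
  toFun σ := MvPolynomial.renameEquiv K σ
  map_one' := MvPolynomial.renameEquiv_refl K
  map_mul' σ τ := (MvPolynomial.renameEquiv_trans K τ σ).symm

/-- The action of permutations of the variables on `K(x_i : i ∈ I)` by `K`-automorphisms,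
determined by `σ(x_i) = x_{σ(i)}`. -/
noncomputable def permHom (K : Type) [Field K] (I : Type) :
    Equiv.Perm I →* (RFF K I ≃ₐ[K] RFF K I) :=
  (IsFractionRing.fieldEquivOfAlgEquivHom K (RFF K I)).comp (renameHom K I)

/-- The fixed field `K(x_i : i ∈ I)^G` of a group `G` of permutations of the variables. -/
noncomputable def fixedSub (K : Type) [Field K] (I : Type) (G : Subgroup (Equiv.Perm I)) :
    IntermediateField K (RFF K I) :=
  IntermediateField.fixedField (G.map (permHom K I))

/-- An extension `L/K` is `K`-rational if it is purely transcendental over `K`, i.e. generated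
by finitely many algebraically independent elements. -/
def IsRatExt (K : Type) [Field K] (L : Type*) [Field L] [Algebra K L] : Prop :=
  ∃ (n : ℕ) (t : Fin n → L), AlgebraicIndependent K t ∧
    IntermediateField.adjoin K (Set.range t) = ⊤

/-!
Pair each variable with its mirror image `x_{9-i}`. The group permutes the four pair sums `s_i`, and
acts on the ratios `z_i = x_i / s_i` through `A₄` and the involution `z ↦ 1 - z`. Four invariants
`∑ s_i (z_i (1 - z_i))^k` are linear in the `s_i` and recover them once the `z_i` are known, so it
remains to find four invariants over which the field of the `z_i` has degree at most `24`: they then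
generate the fixed field, and their number forces algebraic independence.

There the Klein four-group and the involution are handled first, leaving a triple permuted
cyclically by `φ₁`, to which Masuda's generators for cyclic cubics apply in every characteristic.
The triple is formed by the squares of the three nontrivial characters of the Klein four-group if
`2 ≠ 0`, and by the constant terms of Artin–Schreier-type equations for `z_0 - z_i` if `2 = 0`.
-/

section DegreeBounds

variable {K F : Type*} [Field K] [Field F] [Algebra K F]

theorem rank_le_mul_of_aeval_eq_zero (M : IntermediateField K F) {θ : F} {p : Polynomial M}
    (hp : p.Monic) (hθ : Polynomial.aeval θ p = 0) {n : ℕ}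
    (H : ∀ N : IntermediateField K F, M ≤ N → θ ∈ N → Module.rank N F ≤ n) :
    Module.rank M F ≤ (p.natDegree * n : ℕ) := by
  have hint : IsIntegral M θ := ⟨p, hp, hθ⟩
  let E : IntermediateField M F := IntermediateField.adjoin M {θ}
  have : FiniteDimensional M E := IntermediateField.adjoin.finiteDimensional hint
  have hE : Module.rank M E ≤ p.natDegree := by
    rw [← Module.finrank_eq_rank, IntermediateField.adjoin.finrank hint, Nat.cast_le]
    exact Polynomial.natDegree_le_of_dvd (minpoly.dvd _ _ hθ) hp.ne_zero
  have hF : Module.rank E F ≤ n := H (E.restrictScalars K)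
    (fun x hx => E.algebraMap_mem ⟨x, hx⟩) (IntermediateField.mem_adjoin_simple_self M θ)
  have : Module.Free M E := Module.Free.of_divisionRing M E
  have : Module.Free E F := Module.Free.of_divisionRing E F
  rw [← rank_mul_rank M E F, Nat.cast_mul]
  exact mul_le_mul' hE hF

theorem rank_le_two_mul {M : IntermediateField K F} {θ b c : F} (hb : b ∈ M) (hc : c ∈ M)
    (hθ : θ ^ 2 + b * θ + c = 0) {n : ℕ}
    (H : ∀ N : IntermediateField K F, M ≤ N → θ ∈ N → Module.rank N F ≤ n) :
    Module.rank M F ≤ (2 * n : ℕ) := by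
  open Polynomial in
  let p : M[X] := X ^ 2 + C ⟨b, hb⟩ * X + C ⟨c, hc⟩
  have hdeg : p.natDegree = 2 := by unfold p; compute_degree!
  rw [← hdeg]
  refine rank_le_mul_of_aeval_eq_zero M (p := p) (by unfold p; monicity!) ?_ H
  simpa [p, IntermediateField.algebraMap_apply] using hθ

theorem rank_le_two_mul_of_sq_mem {M : IntermediateField K F} {θ : F} (hθ : θ ^ 2 ∈ M) {n : ℕ}
    (H : ∀ N : IntermediateField K F, M ≤ N → θ ∈ N → Module.rank N F ≤ n) :
    Module.rank M F ≤ (2 * n : ℕ) :=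
  rank_le_two_mul (zero_mem M) (neg_mem hθ) (by ring) H

theorem rank_le_three_mul {M : IntermediateField K F} {θ a b c : F} (ha : a ∈ M) (hb : b ∈ M)
    (hc : c ∈ M) (hθ : θ ^ 3 + a * θ ^ 2 + b * θ + c = 0) {n : ℕ}
    (H : ∀ N : IntermediateField K F, M ≤ N → θ ∈ N → Module.rank N F ≤ n) :
    Module.rank M F ≤ (3 * n : ℕ) := by
  open Polynomial in
  let p : M[X] := X ^ 3 + C ⟨a, ha⟩ * X ^ 2 + C ⟨b, hb⟩ * X + C ⟨c, hc⟩
  have hdeg : p.natDegree = 3 := by unfold p; compute_degree!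
  rw [← hdeg]
  refine rank_le_mul_of_aeval_eq_zero M (p := p) (by unfold p; monicity!) ?_ H
  simpa [p, IntermediateField.algebraMap_apply] using hθ

end DegreeBounds

section Masuda

/-- The norm form `a² + b² + c² - ab - bc - ca` of `a + b ω + c ω²`, for `ω` a primitive cube root
of unity; the common denominator of Masuda's generators. -/
def eisensteinForm {R : Type*} [CommRing R] (a b c : R) : R :=
  a ^ 2 + b ^ 2 + c ^ 2 - a * b - b * c - c * a

variable {F : Type*} [Field F]

/-- Masuda's generator: the field of functions of `a, b, c` invariant under `a ↦ b ↦ c ↦ a` is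
generated by `a + b + c`, `masuda a b c` and `masuda c b a`, in every characteristic. -/
def masuda (a b c : F) : F :=
  (a * b ^ 2 + b * c ^ 2 + c * a ^ 2 - 3 * a * b * c) / eisensteinForm a b c

theorem masuda_rotate (a b c : F) : masuda b c a = masuda a b c := by
  unfold masuda eisensteinForm; congr 1 <;> ring

theorem map_masuda {E φ : Type*} [Field E] [FunLike φ F E] [RingHomClass φ F E] (f : φ)
    (a b c : F) : f (masuda a b c) = masuda (f a) (f b) (f c) := by
  simp only [masuda, eisensteinForm, map_div₀, map_add, map_sub, map_mul, map_pow, map_ofNat]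

theorem ne_of_cyclic_of_eisensteinForm_ne_zero {φ : Type*} [FunLike φ F F] (f : φ) {a b c : F}
    (hab : f a = b) (hbc : f b = c) (hca : f c = a) (h : eisensteinForm a b c ≠ 0) :
    a ≠ b ∧ a ≠ c := by
  have hne : ¬(b = a ∧ c = a) := by
    rintro ⟨rfl, rfl⟩
    exact h (by unfold eisensteinForm; ring)
  grind

variable {a b c : F}

theorem masuda_pair_sum (h : eisensteinForm a b c ≠ 0) :
    a * b + b * c + c * a = (a + b + c) * (masuda a b c + masuda c b a) -
      3 * (masuda a b c ^ 2 - masuda a b c * masuda c b a + masuda c b a ^ 2) := by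
  have h' : eisensteinForm c b a = eisensteinForm a b c := by unfold eisensteinForm; ring
  simp only [masuda, h']
  field_simp
  unfold eisensteinForm
  ring

theorem masuda_prod (h : eisensteinForm a b c ≠ 0) :
    a * b * c = (a + b + c) * (masuda a b c * masuda c b a) -
      (masuda a b c ^ 3 + masuda c b a ^ 3) := by
  have h' : eisensteinForm c b a = eisensteinForm a b c := by unfold eisensteinForm; ring
  simp only [masuda, h']
  field_simp
  unfold eisensteinForm
  ring

theorem masuda_cyclic_sum (h : eisensteinForm a b c ≠ 0) :
    a ^ 2 * b + b ^ 2 * c + c ^ 2 * a = masuda c b a * eisensteinForm a b c + 3 * (a * b * c) := by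
  have h' : eisensteinForm c b a = eisensteinForm a b c := by unfold eisensteinForm; ring
  simp only [masuda, h', div_mul_cancel₀ _ h]
  ring

variable {K : Type*} [Field K] [Algebra K F]

theorem mem_of_cyclic_sums {N : IntermediateField K F} (hab : a ≠ b) (hac : a ≠ c) (ha : a ∈ N)
    (h₁ : a + b + c ∈ N) (h₂ : a * b + b * c + c * a ∈ N)
    (h₃ : a ^ 2 * b + b ^ 2 * c + c ^ 2 * a ∈ N) : b ∈ N ∧ c ∈ N := by
  have hsum : b + c ∈ N := by
    convert sub_mem h₁ ha using 1; ring
  have hprod : b * c ∈ N := by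
    convert sub_mem h₂ (mul_mem ha hsum) using 1; ring
  have hne : b * c + a ^ 2 - a * (b + c) ≠ 0 := by
    convert mul_ne_zero (sub_ne_zero.mpr hab) (sub_ne_zero.mpr hac) using 1; ring
  have hb : b ∈ N := by
    have : b = ((a ^ 2 * b + b ^ 2 * c + c ^ 2 * a) - a * (b + c) ^ 2 + a * (b * c)) /
        (b * c + a ^ 2 - a * (b + c)) := by
      rw [eq_div_iff hne]; ring
    rw [this]
    generalize b + c = x, b * c = y, a ^ 2 * b + b ^ 2 * c + c ^ 2 * a = z at *
    aesop
  refine ⟨hb, ?_⟩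
  simpa using sub_mem hsum hb

theorem rank_le_of_masuda_mem {M : IntermediateField K F} (hab : a ≠ b) (hac : a ≠ c)
    (hQ : eisensteinForm a b c ≠ 0) (hsum : a + b + c ∈ M) (hu : masuda a b c ∈ M)
    (hv : masuda c b a ∈ M) {n : ℕ}
    (H : ∀ N : IntermediateField K F, M ≤ N → a ∈ N → b ∈ N → c ∈ N → Module.rank N F ≤ n) :
    Module.rank M F ≤ (3 * n : ℕ) := by
  have h₂ : a * b + b * c + c * a ∈ M := by
    rw [masuda_pair_sum hQ]; aesop
  have h₃ : a * b * c ∈ M := by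
    rw [masuda_prod hQ]; aesop
  have hP : a ^ 2 * b + b ^ 2 * c + c ^ 2 * a ∈ M := by
    have hnorm : eisensteinForm a b c = (a + b + c) ^ 2 - 3 * (a * b + b * c + c * a) := by
      unfold eisensteinForm; ring
    rw [masuda_cyclic_sum hQ, hnorm]
    exact add_mem (mul_mem hv (sub_mem (pow_mem hsum 2) (mul_mem (ofNat_mem M 3) h₂)))
      (mul_mem (ofNat_mem M 3) h₃)
  have hroot : a ^ 3 + -(a + b + c) * a ^ 2 + (a * b + b * c + c * a) * a + -(a * b * c) = 0 := by
    ring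
  refine rank_le_three_mul (neg_mem hsum) h₂ (neg_mem h₃) hroot fun N hMN ha => ?_
  obtain ⟨hb, hc⟩ := mem_of_cyclic_sums hab hac ha (hMN hsum) (hMN h₂) (hMN hP)
  exact H N hMN ha hb hc

end Masuda

theorem mem_of_sum_mul_pow_mem {K F ι : Type*} [Field K] [Field F] [Algebra K F] [Fintype ι]
    {N : IntermediateField K F} {s n : ι → F} (hn : Function.Injective n) (hnN : ∀ i, n i ∈ N)
    (h : ∀ k < Fintype.card ι, ∑ i, s i * n i ^ k ∈ N) (i : ι) : s i ∈ N := by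
  classical
  let n' : ι → N := fun j => ⟨n j, hnN j⟩
  have hn' : Function.Injective n' := fun j k hjk => hn (congrArg Subtype.val hjk)
  let B : Polynomial N := Lagrange.basis Finset.univ n' i
  have hB (j : ι) : Polynomial.aeval (n j) B = if j = i then 1 else 0 := by
    have hval : Polynomial.aeval (n j) B = algebraMap N F (B.eval (n' j)) :=
      Polynomial.aeval_algebraMap_apply_eq_algebraMap_eval (n' j) B
    rw [hval]
    split_ifs with hj
    · rw [hj, Lagrange.eval_basis_self hn'.injOn (Finset.mem_univ i), map_one]
    · rw [Lagrange.eval_basis_of_ne (Ne.symm hj) (Finset.mem_univ j), map_zero]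
  have hdeg : B.natDegree < Fintype.card ι := by
    have := Lagrange.natDegree_basis (s := Finset.univ) hn'.injOn (Finset.mem_univ i)
    have := Fintype.card_pos_iff.mpr ⟨i⟩
    grind
  have hs : s i = ∑ k ∈ Finset.range (Fintype.card ι), B.coeff k * ∑ j, s j * n j ^ k := by
    calc s i = ∑ j, s j * Polynomial.aeval (n j) B := by simp [hB]
      _ = ∑ j, ∑ k ∈ Finset.range (Fintype.card ι), B.coeff k * (s j * n j ^ k) := by
        refine Finset.sum_congr rfl fun j _ => ?_
        rw [Polynomial.aeval_eq_sum_range' hdeg, Finset.mul_sum]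
        refine Finset.sum_congr rfl fun k _ => ?_
        rw [IntermediateField.smul_def, smul_eq_mul]
        ring
      _ = _ := by rw [Finset.sum_comm]; simp only [Finset.mul_sum]
  rw [hs]
  exact sum_mem fun k hk => mul_mem (B.coeff k).2 (h k (Finset.mem_range.mp hk))

theorem aeval_ne_zero_of_eval_ne_zero {K F ι : Type*} [Field K] [Field F] [Algebra K F]
    {t : ι → F} (ht : AlgebraicIndependent K t) {P : MvPolynomial ι K} (v : ι → K)
    (hP : MvPolynomial.eval v P ≠ 0) : MvPolynomial.aeval t P ≠ 0 := fun h =>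
  hP (by rw [algebraicIndependent_iff.mp ht P h, map_zero])

section FixedFields

variable {K : Type} [Field K] {I : Type}

theorem permHom_Xvar (σ : Equiv.Perm I) (i : I) :
    permHom K I σ (Xvar K I i) = Xvar K I (σ i) := by
  simp [permHom, Xvar, renameHom]

theorem Xvar_injective : Function.Injective (Xvar K I) :=
  (IsFractionRing.injective (MvPolynomial I K) (RFF K I)).comp MvPolynomial.X_injective

theorem permHom_injective : Function.Injective (permHom K I) := fun σ τ h => by
  ext i
  apply Xvar_injective (K := K)
  rw [← permHom_Xvar, h, permHom_Xvar]

theorem isTranscendenceBasis_Xvar : IsTranscendenceBasis K (Xvar K I) := by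
  have : Algebra.IsAlgebraic (MvPolynomial I K) (RFF K I) :=
    IsLocalization.isAlgebraic _ (nonZeroDivisors _)
  exact (IsTranscendenceBasis.mvPolynomial I K).algebraMap_comp

theorem trdeg_RFF [Fintype I] : Algebra.trdeg K (RFF K I) = Fintype.card I := by
  simpa using (isTranscendenceBasis_Xvar (K := K) (I := I)).cardinalMk_eq_trdeg.symm

theorem eq_top_of_forall_Xvar_mem {N : IntermediateField K (RFF K I)}
    (h : ∀ i, Xvar K I i ∈ N) : N = ⊤ := by
  have hpoly (P : MvPolynomial I K) : algebraMap _ (RFF K I) P ∈ N := by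
    induction P using MvPolynomial.induction_on with
    | C a => exact N.algebraMap_mem a
    | add p q hp hq => rw [map_add]; exact add_mem hp hq
    | mul_X p i hp => rw [map_mul]; exact mul_mem hp (h i)
  refine eq_top_iff.mpr fun w _ => ?_
  obtain ⟨p, q, -, rfl⟩ := IsFractionRing.div_surjective (A := MvPolynomial I K) w
  exact div_mem (hpoly p) (hpoly q)

theorem mem_fixedSub_closure {S : Set (Equiv.Perm I)} {f : RFF K I}
    (h : ∀ σ ∈ S, permHom K I σ f = f) : f ∈ fixedSub K I (Subgroup.closure S) := by
  have hle : (Subgroup.closure S).map (permHom K I) ≤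
      MulAction.stabilizer (RFF K I ≃ₐ[K] RFF K I) f := by
    rw [Subgroup.map_le_iff_le_comap, Subgroup.closure_le]
    exact h
  exact (IntermediateField.mem_fixedField_iff _ _).mpr fun g hg => hle hg

theorem finrank_fixedSub [Finite I] (G : Subgroup (Equiv.Perm I)) :
    Module.finrank (fixedSub K I G) (RFF K I) = Nat.card G := by
  let e := G.equivMapOfInjective (permHom K I) permHom_injective
  have : Finite (G.map (permHom K I)) := Finite.of_equiv _ e.toEquiv
  have := Fintype.ofFinite (G.map (permHom K I))
  rw [Nat.card_congr e.toEquiv, Nat.card_eq_fintype_card]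
  exact FixedPoints.finrank_eq_card (G.map (permHom K I)) (RFF K I)

open scoped IntermediateField.algebraAdjoinAdjoin in
theorem algebraicIndependent_of_card_le_trdeg {F ι : Type} [Field F] [Algebra K F] [Fintype ι]
    (t : ι → F) [FiniteDimensional (IntermediateField.adjoin K (Set.range t)) F]
    (hcard : Fintype.card ι ≤ Algebra.trdeg K F) : AlgebraicIndependent K t := by
  have : Algebra.IsAlgebraic (Algebra.adjoin K (Set.range t)) F :=
    (IsFractionRing.comap_isAlgebraic_iff (A := Algebra.adjoin K (Set.range t))
      (K := IntermediateField.adjoin K (Set.range t)) (C := F)).mpr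
      (Algebra.IsAlgebraic.of_finite _ _)
  exact (Algebra.IsAlgebraic.isTranscendenceBasis_of_le_trdeg_of_finite K t
    (by simpa using hcard)).1

theorem isRatExt_of_adjoin_eq_top {L ι : Type*} [Field L] [Algebra K L] [Finite ι] {t : ι → L}
    (ht : AlgebraicIndependent K t) (htop : IntermediateField.adjoin K (Set.range t) = ⊤) :
    IsRatExt K L := by
  refine ⟨Nat.card ι, t ∘ (Finite.equivFin ι).symm, ht.comp _ (Equiv.injective _), ?_⟩
  rwa [EquivLike.range_comp]

theorem isRatExt_fixedSub [Fintype I] {ι : Type} [Fintype ι] {G : Subgroup (Equiv.Perm I)}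
    {t : ι → RFF K I} (ht : ∀ i, t i ∈ fixedSub K I G) (hcard : Fintype.card ι ≤ Fintype.card I)
    (hrank : Module.rank (IntermediateField.adjoin K (Set.range t)) (RFF K I) ≤ Nat.card G) :
    IsRatExt K (fixedSub K I G) := by
  have hfin : FiniteDimensional (IntermediateField.adjoin K (Set.range t)) (RFF K I) :=
    Module.rank_lt_aleph0_iff.mp (hrank.trans_lt Cardinal.natCast_lt_aleph0)
  have hind : AlgebraicIndependent K t :=
    algebraicIndependent_of_card_le_trdeg t (by rw [trdeg_RFF]; exact_mod_cast hcard)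
  have hle : IntermediateField.adjoin K (Set.range t) ≤ fixedSub K I G :=
    IntermediateField.adjoin_le_iff.mpr (Set.range_subset_iff.mpr ht)
  have heq : IntermediateField.adjoin K (Set.range t) = fixedSub K I G := by
    refine IntermediateField.eq_of_le_of_finrank_le' hle ?_
    rw [finrank_fixedSub]
    exact Module.finrank_le_of_rank_le hrank
  refine isRatExt_of_adjoin_eq_top (t := fun i => (⟨t i, ht i⟩ : fixedSub K I G))
    ((AlgHom.algebraicIndependent_iff (fixedSub K I G).val Subtype.val_injective).mp hind) ?_
  apply IntermediateField.lift_injective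
  rw [IntermediateField.lift_adjoin, IntermediateField.lift_top, ← Set.range_comp]
  exact heq

end FixedFields

/-- The generator `σ₁` of `G₁₃`. -/
def G13.σ₁ : Equiv.Perm (Fin 8) :=
  Equiv.swap 0 1 * Equiv.swap 2 3 * Equiv.swap 4 5 * Equiv.swap 6 7

/-- The generator `σ₂` of `G₁₃`. -/
def G13.σ₂ : Equiv.Perm (Fin 8) :=
  Equiv.swap 0 2 * Equiv.swap 1 3 * Equiv.swap 4 6 * Equiv.swap 5 7

/-- The generator `κ` of `G₁₃`. -/
def G13.κ : Equiv.Perm (Fin 8) :=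
  Equiv.swap 0 4 * Equiv.swap 1 5 * Equiv.swap 2 6 * Equiv.swap 3 7

/-- The generator `φ₁` of `G₁₃`. -/
def G13.φ₁ : Equiv.Perm (Fin 8) :=
  (Equiv.swap 1 2 * Equiv.swap 2 3) * (Equiv.swap 6 5 * Equiv.swap 5 4)

open G13 in
/-- The group `G₁₃`. -/
def G13 : Subgroup (Equiv.Perm (Fin 8)) := Subgroup.closure {σ₁, σ₂, κ, φ₁}

namespace G13

theorem σ₁_mem : σ₁ ∈ G13 := Subgroup.subset_closure (by simp)
theorem σ₂_mem : σ₂ ∈ G13 := Subgroup.subset_closure (by simp)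
theorem κ_mem : κ ∈ G13 := Subgroup.subset_closure (by simp)
theorem φ₁_mem : φ₁ ∈ G13 := Subgroup.subset_closure (by simp)

theorem exists_apply_zero_eq (i : Fin 8) : ∃ g ∈ G13, g 0 = i := by
  have h : ∀ i : Fin 8, ∃ a b c : Fin 2, (σ₁ ^ (a : ℕ) * σ₂ ^ (b : ℕ) * κ ^ (c : ℕ)) 0 = i := by
    decide
  obtain ⟨a, b, c, hi⟩ := h i
  exact ⟨_, mul_mem (mul_mem (pow_mem σ₁_mem a) (pow_mem σ₂_mem b)) (pow_mem κ_mem c), hi⟩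

instance : MulAction.IsPretransitive G13 (Fin 8) :=
  (MulAction.isPretransitive_iff_base (0 : Fin 8)).mpr fun i => by
    obtain ⟨g, hg, hi⟩ := exists_apply_zero_eq i
    exact ⟨⟨g, hg⟩, hi⟩

theorem le_card : 24 ≤ Nat.card G13 := by
  have h8 : 8 ∣ Nat.card G13 := by
    simpa [MulAction.index_stabilizer_of_transitive G13 (0 : Fin 8)] using
      (MulAction.stabilizer G13 (0 : Fin 8)).index_dvd_card
  have h3 : 3 ∣ Nat.card G13 := by
    rw [← show orderOf φ₁ = 3 from orderOf_eq_prime (by decide) (by decide)]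
    exact Subgroup.orderOf_dvd_natCard G13 φ₁_mem
  exact Nat.le_of_dvd Nat.card_pos
    (Nat.Coprime.mul_dvd_of_dvd_of_dvd (show Nat.Coprime 8 3 by norm_num) h8 h3)

variable {K : Type} [Field K]

theorem mem_fixedSub {f : RFF K (Fin 8)} (h₁ : permHom K _ σ₁ f = f) (h₂ : permHom K _ σ₂ f = f)
    (hκ : permHom K _ κ f = f) (hφ : permHom K _ φ₁ f = f) : f ∈ fixedSub K (Fin 8) G13 :=
  mem_fixedSub_closure (by simpa using ⟨h₁, h₂, hκ, hφ⟩)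

end G13

section PairCoordinates

variable (K : Type) [Field K]

/-- The sum of the variable with index `i` (for `i < 4`) and its mirror image with index `7 - i`. -/
def pairSum (i : Fin 4) : RFF K (Fin 8) :=
  Xvar K (Fin 8) (i.castAdd 4) + Xvar K (Fin 8) (i.castAdd 4).rev

/-- The share of the variable with index `i` in `pairSum K i`; the share of its mirror image is
`1 - pairRatio K i`. -/
def pairRatio (i : Fin 4) : RFF K (Fin 8) := Xvar K (Fin 8) (i.castAdd 4) / pairSum K i

variable {K}

theorem pairSum_ne_zero (i : Fin 4) : pairSum K i ≠ 0 := by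
  have hne : ∀ i : Fin 4, (i.castAdd 4).rev ≠ i.castAdd 4 := by decide
  have h := aeval_ne_zero_of_eval_ne_zero (isTranscendenceBasis_Xvar (K := K)).1
    (P := MvPolynomial.X (i.castAdd 4) + MvPolynomial.X (i.castAdd 4).rev)
    (Pi.single (i.castAdd 4) 1) (by simp [hne i])
  rwa [map_add, MvPolynomial.aeval_X, MvPolynomial.aeval_X] at h

theorem pairRatio_mul_pairSum (i : Fin 4) :
    pairRatio K i * pairSum K i = Xvar K (Fin 8) (i.castAdd 4) :=
  div_mul_cancel₀ _ (pairSum_ne_zero i)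

theorem one_sub_pairRatio_mul_pairSum (i : Fin 4) :
    (1 - pairRatio K i) * pairSum K i = Xvar K (Fin 8) (i.castAdd 4).rev := by
  rw [sub_mul, pairRatio_mul_pairSum, pairSum]
  ring

theorem eq_top_of_pair_mem {N : IntermediateField K (RFF K (Fin 8))}
    (hz : ∀ i, pairRatio K i ∈ N) (hs : ∀ i, pairSum K i ∈ N) : N = ⊤ := by
  have hx (i : Fin 4) : Xvar K (Fin 8) (i.castAdd 4) ∈ N := by
    rw [← pairRatio_mul_pairSum]
    exact mul_mem (hz i) (hs i)
  have hy (i : Fin 4) : Xvar K (Fin 8) (i.castAdd 4).rev ∈ N := by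
    rw [← one_sub_pairRatio_mul_pairSum]
    exact mul_mem (sub_mem (one_mem N) (hz i)) (hs i)
  have hcover : ∀ j : Fin 8, ∃ i : Fin 4, i.castAdd 4 = j ∨ (i.castAdd 4).rev = j := by decide
  refine eq_top_of_forall_Xvar_mem fun j => ?_
  obtain ⟨i, rfl | rfl⟩ := hcover j
  exacts [hx i, hy i]

theorem algebraicIndependent_pairRatio : AlgebraicIndependent K (pairRatio K) := by
  let t : Fin 4 ⊕ Fin 4 → RFF K (Fin 8) := Sum.elim (pairRatio K) (pairSum K)
  have hmem (i) : t i ∈ IntermediateField.adjoin K (Set.range t) :=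
    IntermediateField.subset_adjoin _ _ ⟨i, rfl⟩
  have htop : IntermediateField.adjoin K (Set.range t) = ⊤ :=
    eq_top_of_pair_mem (fun i => hmem (.inl i)) (fun i => hmem (.inr i))
  have : FiniteDimensional (IntermediateField.adjoin K (Set.range t)) (RFF K (Fin 8)) := by
    rw [htop]
    exact Module.Finite.of_surjective (Algebra.linearMap _ _) fun x => ⟨⟨x, trivial⟩, rfl⟩
  have ht : AlgebraicIndependent K t :=
    algebraicIndependent_of_card_le_trdeg t (by simp [trdeg_RFF])
  exact ht.comp Sum.inl Sum.inl_injective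

theorem permHom_pair {σ : Equiv.Perm (Fin 8)} {i j : Fin 4}
    (h : σ (i.castAdd 4) = j.castAdd 4) (h' : σ (i.castAdd 4).rev = (j.castAdd 4).rev) :
    permHom K _ σ (pairRatio K i) = pairRatio K j ∧ permHom K _ σ (pairSum K i) = pairSum K j := by
  simp only [pairRatio, pairSum, map_div₀, map_add, permHom_Xvar, h, h', and_self]

theorem permHom_pair_of_mirror {σ : Equiv.Perm (Fin 8)} {i j : Fin 4}
    (h : σ (i.castAdd 4) = (j.castAdd 4).rev) (h' : σ (i.castAdd 4).rev = j.castAdd 4) :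
    permHom K _ σ (pairRatio K i) = 1 - pairRatio K j ∧
      permHom K _ σ (pairSum K i) = pairSum K j := by
  have hs : permHom K _ σ (pairSum K i) = pairSum K j := by
    rw [pairSum, map_add, permHom_Xvar, permHom_Xvar, h, h', add_comm, pairSum]
  refine ⟨?_, hs⟩
  rw [pairRatio, map_div₀, hs, permHom_Xvar, h, ← one_sub_pairRatio_mul_pairSum,
    mul_div_assoc, div_self (pairSum_ne_zero j), mul_one]

theorem permHom_σ₁_pair (i : Fin 4) :
    permHom K _ G13.σ₁ (pairRatio K i) = pairRatio K (![1, 0, 3, 2] i) ∧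
      permHom K _ G13.σ₁ (pairSum K i) = pairSum K (![1, 0, 3, 2] i) :=
  permHom_pair (by revert i; decide) (by revert i; decide)

theorem permHom_σ₂_pair (i : Fin 4) :
    permHom K _ G13.σ₂ (pairRatio K i) = pairRatio K (![2, 3, 0, 1] i) ∧
      permHom K _ G13.σ₂ (pairSum K i) = pairSum K (![2, 3, 0, 1] i) :=
  permHom_pair (by revert i; decide) (by revert i; decide)

theorem permHom_κ_pair (i : Fin 4) :
    permHom K _ G13.κ (pairRatio K i) = 1 - pairRatio K (![3, 2, 1, 0] i) ∧
      permHom K _ G13.κ (pairSum K i) = pairSum K (![3, 2, 1, 0] i) :=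
  permHom_pair_of_mirror (by revert i; decide) (by revert i; decide)

theorem permHom_φ₁_pair (i : Fin 4) :
    permHom K _ G13.φ₁ (pairRatio K i) = pairRatio K (![0, 2, 3, 1] i) ∧
      permHom K _ G13.φ₁ (pairSum K i) = pairSum K (![0, 2, 3, 1] i) :=
  permHom_pair (by revert i; decide) (by revert i; decide)

end PairCoordinates

section CommonReduction

variable (K : Type) [Field K]

/-- The product of the shares of the variable with index `i` and of its mirror image. -/
def pairNorm (i : Fin 4) : RFF K (Fin 8) := pairRatio K i * (1 - pairRatio K i)

/-- Power sums of the `pairNorm K i`, weighted by the `pairSum K i`. They are `G₁₃`-invariant, and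
over a field containing the `pairRatio K i` they recover the `pairSum K i` by interpolation. -/
def weightedPowerSum (k : ℕ) : RFF K (Fin 8) := ∑ i, pairSum K i * pairNorm K i ^ k

variable {K}

theorem pairNorm_injective : Function.Injective (pairNorm K) := by
  intro i j hij
  by_contra hne
  have h := aeval_ne_zero_of_eval_ne_zero (algebraicIndependent_pairRatio (K := K))
    (P := MvPolynomial.X i - MvPolynomial.X j) (Pi.single i 1) (by simp [Ne.symm hne])
  have h' := aeval_ne_zero_of_eval_ne_zero (algebraicIndependent_pairRatio (K := K))
    (P := 1 - MvPolynomial.X i - MvPolynomial.X j) 0 (by simp)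
  simp only [map_sub, map_one, MvPolynomial.aeval_X] at h h'
  refine mul_ne_zero h h' ?_
  unfold pairNorm at hij
  linear_combination hij

theorem weightedPowerSum_mem_fixedSub (k : ℕ) : weightedPowerSum K k ∈ fixedSub K (Fin 8) G13 := by
  apply G13.mem_fixedSub <;>
  · simp only [weightedPowerSum, pairNorm, Fin.sum_univ_four, map_add, map_sub, map_mul, map_pow,
      map_one, permHom_σ₁_pair, permHom_σ₂_pair, permHom_κ_pair, permHom_φ₁_pair, Matrix.cons_val]
    ring

theorem eq_top_of_weightedPowerSum_mem {N : IntermediateField K (RFF K (Fin 8))}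
    (hz : ∀ i, pairRatio K i ∈ N) (hw : ∀ k < 4, weightedPowerSum K k ∈ N) : N = ⊤ :=
  eq_top_of_pair_mem hz <| mem_of_sum_mul_pow_mem pairNorm_injective
    (fun i => mul_mem (hz i) (sub_mem (one_mem N) (hz i))) hw

/-- A triple of rational functions fixed by `σ₁`, `σ₂` and `κ`, whose entries are permuted
cyclically by `φ₁`. -/
structure IsCyclicTriple (t : Fin 3 → RFF K (Fin 8)) : Prop where
  map_σ₁ (j) : permHom K _ G13.σ₁ (t j) = t j
  map_σ₂ (j) : permHom K _ G13.σ₂ (t j) = t j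
  map_κ (j) : permHom K _ G13.κ (t j) = t j
  map_φ₁ (j) : permHom K _ G13.φ₁ (t j) = t (j + 1)

namespace IsCyclicTriple

variable {t : Fin 3 → RFF K (Fin 8)}

theorem masuda_mem_fixedSub (ht : IsCyclicTriple t) :
    masuda (t 0) (t 1) (t 2) ∈ fixedSub K (Fin 8) G13 ∧
      masuda (t 2) (t 1) (t 0) ∈ fixedSub K (Fin 8) G13 := by
  constructor <;> apply G13.mem_fixedSub <;>
    simp only [map_masuda, ht.map_σ₁, ht.map_σ₂, ht.map_κ, ht.map_φ₁, Fin.reduceAdd, zero_add]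
  exacts [masuda_rotate _ _ _, (masuda_rotate _ _ _).symm]

theorem sum_mem_fixedSub (ht : IsCyclicTriple t) : t 0 + t 1 + t 2 ∈ fixedSub K (Fin 8) G13 := by
  apply G13.mem_fixedSub <;>
    simp only [map_add, ht.map_σ₁, ht.map_σ₂, ht.map_κ, ht.map_φ₁, Fin.reduceAdd, zero_add]
  ring

theorem isRatExt (ht : IsCyclicTriple t) {p q : RFF K (Fin 8)}
    (hp : p ∈ fixedSub K (Fin 8) G13) (hq : q ∈ fixedSub K (Fin 8) G13)
    (hnorm : eisensteinForm (t 0) (t 1) (t 2) ≠ 0)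
    (hsum : t 0 + t 1 + t 2 ∈ IntermediateField.adjoin K {p, q})
    (hrank : ∀ N : IntermediateField K (RFF K (Fin 8)), p ∈ N → q ∈ N → (∀ j, t j ∈ N) →
      (∀ N', N ≤ N' → (∀ i, pairRatio K i ∈ N') → Module.rank N' (RFF K (Fin 8)) ≤ (1 : ℕ)) →
      Module.rank N (RFF K (Fin 8)) ≤ (8 : ℕ)) :
    IsRatExt K (fixedSub K (Fin 8) G13) := by
  obtain ⟨hu, hv⟩ := ht.masuda_mem_fixedSub
  obtain ⟨h01, h02⟩ := ne_of_cyclic_of_eisensteinForm_ne_zero (permHom K _ G13.φ₁)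
    (ht.map_φ₁ 0) (ht.map_φ₁ 1) (ht.map_φ₁ 2) hnorm
  let f : Fin 4 ⊕ Fin 4 → RFF K (Fin 8) := Sum.elim
    ![p, q, masuda (t 0) (t 1) (t 2), masuda (t 2) (t 1) (t 0)] (fun k => weightedPowerSum K k)
  have hfixed : ∀ i, f i ∈ fixedSub K (Fin 8) G13 := by
    rintro (i | k)
    · fin_cases i
      exacts [hp, hq, hu, hv]
    · exact weightedPowerSum_mem_fixedSub k
  refine isRatExt_fixedSub hfixed (by simp) (le_trans ?_ (Nat.cast_le.mpr G13.le_card))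
  let M := IntermediateField.adjoin K (Set.range f)
  have hf (i) : f i ∈ M := IntermediateField.subset_adjoin _ _ ⟨i, rfl⟩
  have hsumM : t 0 + t 1 + t 2 ∈ M := by
    have hpq : {p, q} ⊆ (M : Set (RFF K (Fin 8))) :=
      Set.insert_subset (hf (.inl 0)) (Set.singleton_subset_iff.mpr (hf (.inl 1)))
    exact IntermediateField.adjoin_le_iff.mpr hpq hsum
  refine rank_le_of_masuda_mem (n := 8) h01 h02 hnorm hsumM (hf (.inl 2)) (hf (.inl 3))
    fun N hMN h₀ h₁ h₂ => ?_
  refine hrank N (hMN (hf (.inl 0))) (hMN (hf (.inl 1)))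
    (Fin.forall_fin_succ.mpr ⟨h₀, Fin.forall_fin_two.mpr ⟨h₁, h₂⟩⟩) fun N' hN' hz => ?_
  rw [eq_top_of_weightedPowerSum_mem hz fun k hk => hN' (hMN (hf (.inr ⟨k, hk⟩))),
    IntermediateField.rank_top, Nat.cast_one]

end IsCyclicTriple

end CommonReduction

section OddCharacteristic

/-- The values on a 4-tuple of the three nontrivial characters of the Klein four-group. -/
def signedSum {R : Type*} [CommRing R] (z : Fin 4 → R) : Fin 3 → R :=
  ![z 0 + z 1 - z 2 - z 3, z 0 - z 1 + z 2 - z 3, z 0 - z 1 - z 2 + z 3]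

/-- The product of the three signed sums of a 4-tuple with its sum, recentred so as to change sign
under `z ↦ 1 - z`. -/
def signedProduct {R : Type*} [CommRing R] (z : Fin 4 → R) : R :=
  (z 0 + z 1 + z 2 + z 3 - 2) * signedSum z 0 * signedSum z 1 * signedSum z 2

theorem mem_of_signedSum_mem {K F : Type*} [Field K] [Field F] [Algebra K F] {z : Fin 4 → F}
    {N : IntermediateField K F} (two_ne : (2 : F) ≠ 0) (hne : ∀ j, signedSum z j ≠ 0)
    (hp : signedProduct z ∈ N) (hg : ∀ j, signedSum z j ∈ N) (i : Fin 4) : z i ∈ N := by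
  have hS : z 0 + z 1 + z 2 + z 3 ∈ N := by
    have hprod : z 0 + z 1 + z 2 + z 3 =
        signedProduct z / (signedSum z 0 * signedSum z 1 * signedSum z 2) + 2 := by
      have := hne 0; have := hne 1; have := hne 2
      unfold signedProduct
      field_simp
      ring
    rw [hprod]
    exact add_mem (div_mem hp (mul_mem (mul_mem (hg 0) (hg 1)) (hg 2))) (ofNat_mem N 2)
  have hfour (x : F) (hx : 2 * (2 * x) ∈ N) : x ∈ N := by
    simpa [two_ne] using div_mem (div_mem hx (ofNat_mem N 2)) (ofNat_mem N 2)
  have hg0 : z 0 + z 1 - z 2 - z 3 ∈ N := hg 0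
  have hg1 : z 0 - z 1 + z 2 - z 3 ∈ N := hg 1
  have hg2 : z 0 - z 1 - z 2 + z 3 ∈ N := hg 2
  apply hfour
  match i with
  | 0 => convert add_mem (add_mem (add_mem hS hg0) hg1) hg2 using 1; ring
  | 1 => convert sub_mem (sub_mem (add_mem hS hg0) hg1) hg2 using 1; ring
  | 2 => convert sub_mem (add_mem (sub_mem hS hg0) hg1) hg2 using 1; ring
  | 3 => convert add_mem (sub_mem (sub_mem hS hg0) hg1) hg2 using 1; ring

theorem rank_le_of_signedSum_sq_mem {K F : Type*} [Field K] [Field F] [Algebra K F]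
    {z : Fin 4 → F} {M : IntermediateField K F} (two_ne : (2 : F) ≠ 0)
    (hne : ∀ j, signedSum z j ≠ 0) (hp : signedProduct z ∈ M)
    (hg : ∀ j, signedSum z j ^ 2 ∈ M) {n : ℕ}
    (H : ∀ N : IntermediateField K F, M ≤ N → (∀ i, z i ∈ N) → Module.rank N F ≤ n) :
    Module.rank M F ≤ (2 * (2 * (2 * n)) : ℕ) := by
  refine rank_le_two_mul_of_sq_mem (hg 0) fun N₁ h₁ hg₀ => ?_
  refine rank_le_two_mul_of_sq_mem (h₁ (hg 1)) fun N₂ h₂ hg₁ => ?_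
  refine rank_le_two_mul_of_sq_mem (h₂ (h₁ (hg 2))) fun N h hg₂ => ?_
  have hMN := h₁.trans (h₂.trans h)
  exact H N hMN (mem_of_signedSum_mem two_ne hne (hMN hp)
    (Fin.forall_fin_succ.mpr ⟨h (h₂ hg₀), Fin.forall_fin_two.mpr ⟨h hg₁, hg₂⟩⟩))

variable {K : Type} [Field K]

theorem signedSum_pairRatio_ne_zero (j : Fin 3) : signedSum (pairRatio K) j ≠ 0 := by
  have h := aeval_ne_zero_of_eval_ne_zero (algebraicIndependent_pairRatio (K := K))
    (P := signedSum MvPolynomial.X j) (Pi.single 0 1) (by fin_cases j <;> simp [signedSum])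
  fin_cases j <;> simpa [signedSum] using h

theorem eisensteinForm_signedSum_sq_ne_zero (two_ne : (2 : K) ≠ 0) :
    eisensteinForm (signedSum (pairRatio K) 0 ^ 2) (signedSum (pairRatio K) 1 ^ 2)
      (signedSum (pairRatio K) 2 ^ 2) ≠ 0 := by
  have h := aeval_ne_zero_of_eval_ne_zero (algebraicIndependent_pairRatio (K := K))
    (P := eisensteinForm (signedSum MvPolynomial.X 0 ^ 2) (signedSum MvPolynomial.X 1 ^ 2)
      (signedSum MvPolynomial.X 2 ^ 2)) ![1, 0, 1, 0] ?_
  · simpa [eisensteinForm, signedSum] using h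
  · convert pow_ne_zero 4 two_ne using 1
    simp only [eisensteinForm, signedSum, map_add, map_sub, map_mul, map_pow, MvPolynomial.eval_X,
      Matrix.cons_val]
    ring

theorem isCyclicTriple_signedSum_sq : IsCyclicTriple fun j => signedSum (pairRatio K) j ^ 2 := by
  constructor <;> refine Fin.forall_fin_succ.mpr ⟨?_, Fin.forall_fin_two.mpr ⟨?_, ?_⟩⟩ <;>
    simp only [signedSum, map_add, map_sub, map_pow, permHom_σ₁_pair, permHom_σ₂_pair,
      permHom_κ_pair, permHom_φ₁_pair, Matrix.cons_val, Fin.isValue, Fin.succ_zero_eq_one,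
      Fin.succ_one_eq_two, Fin.reduceAdd, zero_add] <;>
    ring

theorem signedProduct_mem_fixedSub : signedProduct (pairRatio K) ∈ fixedSub K (Fin 8) G13 := by
  have htwo (σ : Equiv.Perm (Fin 8)) : permHom K _ σ 2 = 2 := map_ofNat _ 2
  apply G13.mem_fixedSub <;>
  · simp only [signedProduct, signedSum, map_add, map_sub, map_mul, htwo, permHom_σ₁_pair,
      permHom_σ₂_pair, permHom_κ_pair, permHom_φ₁_pair, Matrix.cons_val]
    ring

theorem isRatExt_fixedSub_G13_of_two_ne_zero (two_ne : (2 : K) ≠ 0) :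
    IsRatExt K (fixedSub K (Fin 8) G13) := by
  have ht := isCyclicTriple_signedSum_sq (K := K)
  have two_ne' : (2 : RFF K (Fin 8)) ≠ 0 := by
    rw [← map_ofNat (algebraMap K (RFF K (Fin 8))) 2]
    exact (map_ne_zero _).mpr two_ne
  refine ht.isRatExt signedProduct_mem_fixedSub ht.sum_mem_fixedSub
    (eisensteinForm_signedSum_sq_ne_zero two_ne)
    (IntermediateField.subset_adjoin _ _ (by simp)) fun N hp _ ht' H => ?_
  exact rank_le_of_signedSum_sq_mem two_ne' signedSum_pairRatio_ne_zero hp ht' H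

end OddCharacteristic

section CharacteristicTwo

/-- The differences of the three pairings `z₀z₁ + z₂z₃`, `z₀z₂ + z₁z₃`, `z₀z₃ + z₁z₂` of a
4-tuple. -/
def pairingDifference {R : Type*} [CommRing R] (z : Fin 4 → R) : Fin 3 → R :=
  ![(z 0 - z 1) * (z 2 - z 3), (z 0 - z 2) * (z 3 - z 1), (z 0 - z 3) * (z 1 - z 2)]

/-- The second elementary symmetric function of a 4-tuple. -/
def esymmTwo {R : Type*} [CommRing R] (z : Fin 4 → R) : R :=
  z 0 * z 1 + z 0 * z 2 + z 0 * z 3 + z 1 * z 2 + z 1 * z 3 + z 2 * z 3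

/-- The product of the values `e₂` and `e₂ + e₁` which, in characteristic two, the second elementary
symmetric function takes at a 4-tuple `z` and at `1 - z`. -/
def esymmTwoNorm {R : Type*} [CommRing R] (z : Fin 4 → R) : R :=
  esymmTwo z * (esymmTwo z + ∑ i, z i)

theorem mem_of_esymmTwo_mem {K F : Type*} [Field K] [Field F] [Algebra K F] {z : Fin 4 → F}
    {N : IntermediateField K F} (two_eq : (2 : F) = 0) (hne : ∑ i, z i ≠ 0)
    (he : ∑ i, z i ∈ N) (he' : esymmTwo z ∈ N) (h₁ : z 0 - z 1 ∈ N) (h₂ : z 0 - z 2 ∈ N)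
    (i : Fin 4) : z i ∈ N := by
  have h₃ : z 0 - z 3 ∈ N := by
    convert add_mem he (add_mem h₁ h₂) using 1
    rw [Fin.sum_univ_four]
    linear_combination (-z 0 - z 3) * two_eq
  have h₀ : z 0 ∈ N := by
    have hz : z 0 = (esymmTwo z - ((z 0 - z 1) * (z 0 - z 2) + (z 0 - z 1) * (z 0 - z 3) +
        (z 0 - z 2) * (z 0 - z 3))) / ∑ i, z i := by
      rw [eq_div_iff hne, Fin.sum_univ_four, esymmTwo]
      linear_combination (2 * z 0 ^ 2 - z 0 * (z 1 + z 2 + z 3)) * two_eq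
    rw [hz]
    exact div_mem (sub_mem he' (add_mem (add_mem (mul_mem h₁ h₂) (mul_mem h₁ h₃))
      (mul_mem h₂ h₃))) he
  fin_cases i
  · exact h₀
  · simpa using sub_mem h₀ h₁
  · simpa using sub_mem h₀ h₂
  · simpa using sub_mem h₀ h₃

theorem rank_le_of_pairingDifference_mem {K F : Type*} [Field K] [Field F] [Algebra K F]
    {z : Fin 4 → F} {M : IntermediateField K F} (two_eq : (2 : F) = 0) (hne : ∑ i, z i ≠ 0)
    (he : ∑ i, z i ∈ M) (hq : esymmTwoNorm z ∈ M) (hD : ∀ j, pairingDifference z j ∈ M) {n : ℕ}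
    (H : ∀ N : IntermediateField K F, M ≤ N → (∀ i, z i ∈ N) → Module.rank N F ≤ n) :
    Module.rank M F ≤ (2 * (2 * (2 * n)) : ℕ) := by
  have root₀ : esymmTwo z ^ 2 + (∑ i, z i) * esymmTwo z + -esymmTwoNorm z = 0 := by
    unfold esymmTwoNorm
    ring
  have root₁ : (z 0 - z 1) ^ 2 + (∑ i, z i) * (z 0 - z 1) + pairingDifference z 0 = 0 := by
    simp only [pairingDifference, Fin.sum_univ_four, Matrix.cons_val]
    linear_combination ((z 0 - z 1) * (z 0 + z 2)) * two_eq
  have root₂ : (z 0 - z 2) ^ 2 + (∑ i, z i) * (z 0 - z 2) + pairingDifference z 1 = 0 := by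
    simp only [pairingDifference, Fin.sum_univ_four, Matrix.cons_val]
    linear_combination ((z 0 - z 2) * (z 0 + z 3)) * two_eq
  refine rank_le_two_mul he (neg_mem hq) root₀ fun N₁ h₁ hθ₁ => ?_
  refine rank_le_two_mul (h₁ he) (h₁ (hD 0)) root₁ fun N₂ h₂ hθ₂ => ?_
  refine rank_le_two_mul (h₂ (h₁ he)) (h₂ (h₁ (hD 1))) root₂ fun N h hθ₃ => ?_
  have hMN := h₁.trans (h₂.trans h)
  exact H N hMN (mem_of_esymmTwo_mem two_eq hne (hMN he) (h (h₂ hθ₁)) (h hθ₂) hθ₃)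

variable {K : Type} [Field K]

theorem sum_pairRatio_ne_zero : ∑ i, pairRatio K i ≠ 0 := by
  have h := aeval_ne_zero_of_eval_ne_zero (algebraicIndependent_pairRatio (K := K))
    (P := ∑ i, MvPolynomial.X i) (Pi.single 0 1) (by simp)
  simpa only [map_sum, MvPolynomial.aeval_X] using h

theorem eisensteinForm_pairingDifference_ne_zero (two_eq : (2 : K) = 0) :
    eisensteinForm (pairingDifference (pairRatio K) 0) (pairingDifference (pairRatio K) 1)
      (pairingDifference (pairRatio K) 2) ≠ 0 := by
  have h := aeval_ne_zero_of_eval_ne_zero (algebraicIndependent_pairRatio (K := K))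
    (P := eisensteinForm (pairingDifference MvPolynomial.X 0) (pairingDifference MvPolynomial.X 1)
      (pairingDifference MvPolynomial.X 2)) ![0, 0, 1, 1] ?_
  · simpa [eisensteinForm, pairingDifference] using h
  · convert one_ne_zero (α := K) using 1
    simp only [eisensteinForm, pairingDifference, map_add, map_sub, map_mul, map_pow,
      MvPolynomial.eval_X, Matrix.cons_val]
    linear_combination two_eq

theorem isCyclicTriple_pairingDifference :
    IsCyclicTriple (pairingDifference (pairRatio K)) := by
  constructor <;> refine Fin.forall_fin_succ.mpr ⟨?_, Fin.forall_fin_two.mpr ⟨?_, ?_⟩⟩ <;>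
    simp only [pairingDifference, map_sub, map_mul, permHom_σ₁_pair, permHom_σ₂_pair,
      permHom_κ_pair, permHom_φ₁_pair, Matrix.cons_val, Fin.isValue, Fin.succ_zero_eq_one,
      Fin.succ_one_eq_two, Fin.reduceAdd, zero_add] <;>
    ring

theorem permHom_κ_sum_pairRatio (two_eq : (2 : RFF K (Fin 8)) = 0) :
    permHom K _ G13.κ (∑ i, pairRatio K i) = ∑ i, pairRatio K i := by
  simp only [Fin.sum_univ_four, map_add, permHom_κ_pair, Matrix.cons_val]
  linear_combination
    (2 - pairRatio K 0 - pairRatio K 1 - pairRatio K 2 - pairRatio K 3) * two_eq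

theorem permHom_κ_esymmTwo_pairRatio (two_eq : (2 : RFF K (Fin 8)) = 0) :
    permHom K _ G13.κ (esymmTwo (pairRatio K)) =
      esymmTwo (pairRatio K) + ∑ i, pairRatio K i := by
  simp only [esymmTwo, Fin.sum_univ_four, map_add, map_mul, permHom_κ_pair, Matrix.cons_val]
  linear_combination
    (3 - 2 * (pairRatio K 0 + pairRatio K 1 + pairRatio K 2 + pairRatio K 3)) * two_eq

theorem sum_pairRatio_mem_fixedSub (two_eq : (2 : RFF K (Fin 8)) = 0) :
    ∑ i, pairRatio K i ∈ fixedSub K (Fin 8) G13 := by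
  apply G13.mem_fixedSub (hκ := permHom_κ_sum_pairRatio two_eq) <;>
  · simp only [Fin.sum_univ_four, map_add, permHom_σ₁_pair, permHom_σ₂_pair, permHom_φ₁_pair,
      Matrix.cons_val]
    ring

theorem esymmTwoNorm_mem_fixedSub (two_eq : (2 : RFF K (Fin 8)) = 0) :
    esymmTwoNorm (pairRatio K) ∈ fixedSub K (Fin 8) G13 := by
  have hκ : permHom K _ G13.κ (esymmTwoNorm (pairRatio K)) = esymmTwoNorm (pairRatio K) := by
    rw [esymmTwoNorm, map_mul, map_add, permHom_κ_sum_pairRatio two_eq,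
      permHom_κ_esymmTwo_pairRatio two_eq]
    linear_combination
      (esymmTwo (pairRatio K) + ∑ i, pairRatio K i) * (∑ i, pairRatio K i) * two_eq
  apply G13.mem_fixedSub (hκ := hκ) <;>
  · simp only [esymmTwoNorm, esymmTwo, Fin.sum_univ_four, map_add, map_mul, permHom_σ₁_pair,
      permHom_σ₂_pair, permHom_φ₁_pair, Matrix.cons_val]
    ring

theorem isRatExt_fixedSub_G13_of_two_eq_zero (two_eq : (2 : K) = 0) :
    IsRatExt K (fixedSub K (Fin 8) G13) := by
  have two_eq' : (2 : RFF K (Fin 8)) = 0 := by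
    rw [← map_ofNat (algebraMap K (RFF K (Fin 8))) 2, two_eq, map_zero]
  refine isCyclicTriple_pairingDifference.isRatExt (sum_pairRatio_mem_fixedSub two_eq')
    (esymmTwoNorm_mem_fixedSub two_eq') (eisensteinForm_pairingDifference_ne_zero two_eq) ?_
    fun N he hq hD H => rank_le_of_pairingDifference_mem two_eq' sum_pairRatio_ne_zero he hq hD H
  convert IntermediateField.zero_mem _ using 1
  simp only [pairingDifference, Matrix.cons_val]
  ring

end CharacteristicTwo

/-- **Rationality for `G₁₃`.** Let `K` be any field and `G₁₃ ⊆ S₈` the subgroup of order 24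
generated by `σ₁ = (1,2)(3,4)(5,6)(7,8)`, `σ₂ = (1,3)(2,4)(5,7)(6,8)`, `κ = (1,5)(2,6)(3,7)(4,8)`
and `φ₁ = (2,3,4)(7,6,5)` (written here with indices `0,…,7`). Then `K(x₁,…,x₈)^{G₁₃}` is
`K`-rational. -/
theorem rationality_G13 (K : Type) [Field K] :
    IsRatExt K ↥(fixedSub K (Fin 8) (Subgroup.closure
      {Equiv.swap (0 : Fin 8) 1 * Equiv.swap 2 3 * Equiv.swap 4 5 * Equiv.swap 6 7,
       Equiv.swap (0 : Fin 8) 2 * Equiv.swap 1 3 * Equiv.swap 4 6 * Equiv.swap 5 7,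
       Equiv.swap (0 : Fin 8) 4 * Equiv.swap 1 5 * Equiv.swap 2 6 * Equiv.swap 3 7,
       (Equiv.swap (1 : Fin 8) 2 * Equiv.swap 2 3) * (Equiv.swap (6 : Fin 8) 5 * Equiv.swap 5 4)})) := by
  by_cases h : (2 : K) = 0
  · exact isRatExt_fixedSub_G13_of_two_eq_zero h
  · exact isRatExt_fixedSub_G13_of_two_ne_zero h
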